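/- For every integer k ≥ 1, the minimum real compatibility degree s_ℝ(2, 2, (2, k+1)) — the infimum, over all pairs consisting of a 2-outcome real POVM E and a (k+1)-outcome real POVM F on ℝ², of the compatibility degree of (E, F) — equals (k−1+√(k+1))/(2k). Moreover, this value is attained by the pair E = ((1/2)·[[1,1],[1,1]], (1/2)·[[1,−1],[−1,1]]) and F = (diag(0,1), diag(1,0), 0_2, …, 0_2) (the (k+1)-outcome POVM whose first two effects are diag(0,1) and diag(1,0) and whose remaining k−1 effects are the zero matrix): the compatibility degree of this pair (E, F) equals (k−1+√(k+1))/(2k). -/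

import Mathlib

open Matrix

/-- A (real) POVM: a family of PSD real symmetric matrices summing to the identity. -/
def IsPOVM {d : ℕ} {ι : Type*} [Fintype ι] (E : ι → Matrix (Fin d) (Fin d) ℝ) : Prop :=
  (∀ i, (E i).PosSemidef) ∧ ∑ i, E i = 1

/-- Two real POVMs are compatible if they admit a joint POVM with the given marginals. -/
def Compatible {d m₁ m₂ : ℕ} (E : Fin m₁ → Matrix (Fin d) (Fin d) ℝ)
    (F : Fin m₂ → Matrix (Fin d) (Fin d) ℝ) : Prop :=
  ∃ J : Fin m₁ × Fin m₂ → Matrix (Fin d) (Fin d) ℝ,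
    IsPOVM J ∧ (∀ a, E a = ∑ b, J (a, b)) ∧ (∀ b, F b = ∑ a, J (a, b))

/-- The noisy version at level `s` of an `m`-outcome POVM: `E_i(s) = s·E_i + (1−s)·I/m`. -/
noncomputable def noisy {d m : ℕ} (s : ℝ) (E : Fin m → Matrix (Fin d) (Fin d) ℝ) :
    Fin m → Matrix (Fin d) (Fin d) ℝ :=
  fun i => s • E i + ((1 - s) / (m : ℝ)) • (1 : Matrix (Fin d) (Fin d) ℝ)

/-- The compatibility degree of a pair of real POVMs: the supremum of those `s ∈ [0,1]` for
which the noisy versions at level `s` are compatible. -/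
noncomputable def compatDeg {d m₁ m₂ : ℕ} (E : Fin m₁ → Matrix (Fin d) (Fin d) ℝ)
    (F : Fin m₂ → Matrix (Fin d) (Fin d) ℝ) : ℝ :=
  sSup {s : ℝ | s ∈ Set.Icc (0 : ℝ) 1 ∧ Compatible (noisy s E) (noisy s F)}

/-- The Hadamard-basis measurement `E = ((1/2)[[1,1],[1,1]], (1/2)[[1,−1],[−1,1]])`. -/
noncomputable def Eopt : Fin 2 → Matrix (Fin 2) (Fin 2) ℝ := fun i =>
  if i = 0 then (1 / 2 : ℝ) • !![1, 1; 1, 1] else (1 / 2 : ℝ) • !![1, -1; -1, 1]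

/-- The `(k+1)`-outcome POVM `F = (diag(0,1), diag(1,0), 0, …, 0)`. -/
noncomputable def Fopt (k : ℕ) : Fin (k + 1) → Matrix (Fin 2) (Fin 2) ℝ := fun i =>
  if (i : ℕ) = 0 then !![0, 0; 0, 1]
  else if (i : ℕ) = 1 then !![1, 0; 0, 0]
  else 0

namespace QAux

lemma psd_iff (M : Matrix (Fin 2) (Fin 2) ℝ) : M.PosSemidef ↔
    M 1 0 = M 0 1 ∧ 0 ≤ M 0 0 ∧ 0 ≤ M 1 1 ∧ (M 0 1) ^ 2 ≤ M 0 0 * M 1 1 := by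
  constructor
  · intro h
    have h1 : M 1 0 = M 0 1 := by simpa using h.1.apply 0 1
    refine ⟨h1, h.diag_nonneg, h.diag_nonneg, ?_⟩
    have h2 := h.det_nonneg
    rw [Matrix.det_fin_two, h1] at h2
    nlinarith
  · rintro ⟨h1, h2, h3, h4⟩
    refine Matrix.PosSemidef.of_dotProduct_mulVec_nonneg ?_ ?_
    · ext i j
      fin_cases i <;> fin_cases j <;> simp [h1]
    · intro v
      simp only [dotProduct, mulVec, Fin.sum_univ_two, Pi.star_apply, star_trivial, h1]
      generalize M 0 0 = a at *
      generalize M 0 1 = x at *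
      generalize M 1 1 = d at *
      generalize v 0 = u at *
      generalize v 1 = w at *
      rcases h2.eq_or_lt with h | h
      · subst h
        have hx : x = 0 := by nlinarith
        subst hx
        nlinarith [mul_nonneg h3 (sq_nonneg w)]
      · refine nonneg_of_mul_nonneg_right ?_ h
        nlinarith [sq_nonneg (a * u + x * w), mul_nonneg (sub_nonneg.2 h4) (sq_nonneg w)]

/-- The cone. -/
def cone : Set (ℝ × ℝ × ℝ) := {v | 0 ≤ v.1 ∧ 0 ≤ v.2.2 ∧ v.2.1 ^ 2 ≤ v.1 * v.2.2}

lemma abs_le_of_cone {a x d t : ℝ} (ha : 0 ≤ a) (hd : 0 ≤ d) (h : x ^ 2 ≤ a * d) (ht : 0 < t) :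
    |x| ≤ (t * a + d / t) / 2 := by
  have h0 : 0 ≤ (t * a + d / t) / 2 := by positivity
  refine abs_le_of_sq_le_sq ?_ h0
  have : t * a * (d / t) = a * d := by field_simp
  nlinarith [sq_nonneg (t * a - d / t)]

lemma cone_add {v w : ℝ × ℝ × ℝ} (hv : v ∈ cone) (hw : w ∈ cone) : v + w ∈ cone := by
  obtain ⟨a, x, d⟩ := v
  obtain ⟨a', x', d'⟩ := w
  simp only [cone, Set.mem_ofPred_eq, Prod.mk_add_mk] at *
  obtain ⟨h1, h2, h3⟩ := hv
  obtain ⟨k1, k2, k3⟩ := hw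
  refine ⟨by positivity, by positivity, ?_⟩
  have : x * x' * 2 ≤ a * d' + a' * d := by
    refine le_of_abs_le (abs_le_of_sq_le_sq ?_ (by positivity))
    have := mul_le_mul h3 k3 (by positivity) (by positivity)
    nlinarith [sq_nonneg (a * d' - a' * d)]
  nlinarith

lemma cone_smul {v : ℝ × ℝ × ℝ} {c : ℝ} (hc : 0 ≤ c) (hv : v ∈ cone) : c • v ∈ cone := by
  obtain ⟨a, x, d⟩ := v
  simp only [cone, Set.mem_ofPred_eq, Prod.smul_mk, smul_eq_mul] at *
  obtain ⟨h1, h2, h3⟩ := hv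
  refine ⟨by positivity, by positivity, ?_⟩
  nlinarith [mul_le_mul_of_nonneg_left h3 (sq_nonneg c)]

lemma cone_convex : Convex ℝ cone := fun _ hv _ hw _ _ ha hb _ =>
  cone_add (cone_smul ha hv) (cone_smul hb hw)

lemma cone_closed : IsClosed cone := by
  have h1 : IsClosed {v : ℝ × ℝ × ℝ | 0 ≤ v.1} := isClosed_le (by fun_prop) (by fun_prop)
  have h2 : IsClosed {v : ℝ × ℝ × ℝ | 0 ≤ v.2.2} := isClosed_le (by fun_prop) (by fun_prop)
  have h3 : IsClosed {v : ℝ × ℝ × ℝ | v.2.1 ^ 2 ≤ v.1 * v.2.2} :=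
    isClosed_le (by fun_prop) (by fun_prop)
  exact h1.inter (h2.inter h3)

/-- Order interval. -/
def intv (G : ℝ × ℝ × ℝ) : Set (ℝ × ℝ × ℝ) := {v | v ∈ cone ∧ G - v ∈ cone}

lemma intv_convex (G : ℝ × ℝ × ℝ) : Convex ℝ (intv G) := by
  intro v hv w hw a b ha hb hab
  refine ⟨cone_convex hv.1 hw.1 ha hb hab, ?_⟩
  have := cone_convex hv.2 hw.2 ha hb hab
  convert this using 1
  have hG : G = a • G + b • G := by rw [← add_smul, hab, one_smul]
  nth_rewrite 1 [hG]
  simp only [smul_sub]; abel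

lemma intv_compact (G : ℝ × ℝ × ℝ) : IsCompact (intv G) := by
  obtain ⟨A, X, D⟩ := G
  have hc : IsClosed (intv (A, X, D)) :=
    cone_closed.inter (cone_closed.preimage (by fun_prop))
  refine IsCompact.of_isClosed_subset
    (isCompact_Icc (a := ((0 : ℝ), -((1 * A + D / 1) / 2), (0 : ℝ)))
      (b := (A, (1 * A + D / 1) / 2, D))) hc ?_
  rintro ⟨a, x, d⟩ ⟨h, h'⟩
  simp only [cone, Set.mem_ofPred_eq, Prod.mk_sub_mk] at h h'
  have := abs_le.1 (abs_le_of_cone h.1 h.2.1 h.2.2 one_pos)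
  simp only [Set.mem_Icc, Prod.mk_le_mk]
  refine ⟨⟨h.1, ?_, h.2.1⟩, ?_, ?_, ?_⟩ <;> linarith [h'.1, h'.2.1]

/-- bilinear form -/
def bil (p1 p2 q1 q2 : ℝ) (G : ℝ × ℝ × ℝ) : ℝ :=
  p1 * q1 * G.1 + (p1 * q2 + p2 * q1) * G.2.1 + p2 * q2 * G.2.2

lemma bil_nonneg (y1 y2 : ℝ) {G : ℝ × ℝ × ℝ} (hG : G ∈ cone) : 0 ≤ bil y1 y2 y1 y2 G := by
  obtain ⟨a, x, d⟩ := G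
  obtain ⟨h1, h2, h3⟩ := hG
  simp only [bil] at *
  rcases h1.eq_or_lt with h | h
  · subst h
    have hx : x = 0 := by nlinarith
    subst hx
    nlinarith [mul_nonneg h2 (sq_nonneg y2)]
  · refine nonneg_of_mul_nonneg_right ?_ h
    nlinarith [sq_nonneg (a * y1 + x * y2), mul_nonneg (sub_nonneg.2 h3) (sq_nonneg y2)]

lemma bil_cs (p1 p2 q1 q2 : ℝ) {G : ℝ × ℝ × ℝ} (hG : G ∈ cone) :
    |bil p1 p2 q1 q2 G| ≤ √(bil p1 p2 p1 p2 G) * √(bil q1 q2 q1 q2 G) := by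
  rw [← Real.sqrt_mul (bil_nonneg _ _ hG)]
  refine Real.abs_le_sqrt ?_
  obtain ⟨a, x, d⟩ := G
  obtain ⟨h1, h2, h3⟩ := hG
  simp only [bil] at *
  nlinarith [mul_nonneg (sub_nonneg.2 h3) (sq_nonneg (p1 * q2 - p2 * q1))]

lemma exists_opt (p1 p2 q1 q2 : ℝ) {G : ℝ × ℝ × ℝ} (hG : G ∈ cone)
    (hP : 0 < bil p1 p2 p1 p2 G) (hQ : 0 < bil q1 q2 q1 q2 G) :
    ∃ J ∈ intv G, (√(bil p1 p2 p1 p2 G) * √(bil q1 q2 q1 q2 G) + bil p1 p2 q1 q2 G) / 2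
      ≤ bil p1 p2 q1 q2 J := by
  have hcs := bil_cs p1 p2 q1 q2 hG
  have hP' := Real.sqrt_pos.2 hP
  have hQ' := Real.sqrt_pos.2 hQ
  have hP2 := Real.sq_sqrt hP.le
  have hQ2 := Real.sq_sqrt hQ.le
  set P := √(bil p1 p2 p1 p2 G) with hPd
  set Q := √(bil q1 q2 q1 q2 G) with hQd
  set B := bil p1 p2 q1 q2 G with hB
  have hle := (abs_le.1 hcs).1
  rcases hle.eq_or_lt with h | h
  · refine ⟨0, ⟨by simp [cone], by simpa using hG⟩, ?_⟩
    rw [← h]; simp [bil]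
  -- y = Q p + P q
  set y1 := Q * p1 + P * q1 with hy1
  set y2 := Q * p2 + P * q2 with hy2
  set N := bil y1 y2 y1 y2 G with hN
  have hNe : N = 2 * P * Q * (P * Q + B) := by
    have : N = Q ^ 2 * bil p1 p2 p1 p2 G + P ^ 2 * bil q1 q2 q1 q2 G + 2 * P * Q * B := by
      simp only [hN, hB, bil, hy1, hy2]; ring
    rw [this, ← hP2, ← hQ2]; ring
  have hNpos : 0 < N := by
    rw [hNe]
    have : 0 < P * Q + B := by linarith
    positivity
  have e1 : bil p1 p2 y1 y2 G = P * (P * Q + B) := by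
    have : bil p1 p2 y1 y2 G = Q * bil p1 p2 p1 p2 G + P * B := by
      simp only [hB, bil, hy1, hy2]; ring
    rw [this, ← hP2]; ring
  have e2 : bil q1 q2 y1 y2 G = Q * (P * Q + B) := by
    have : bil q1 q2 y1 y2 G = Q * B + P * bil q1 q2 q1 q2 G := by
      simp only [hB, bil, hy1, hy2]; ring
    rw [this, ← hQ2]; ring
  clear_value N y1 y2 B P Q
  obtain ⟨a, x, d⟩ := G
  set w1 := a * y1 + x * y2 with hw1
  set w2 := x * y1 + d * y2 with hw2
  refine ⟨(N⁻¹ * w1 ^ 2, N⁻¹ * (w1 * w2), N⁻¹ * w2 ^ 2), ⟨⟨?_, ?_, ?_⟩, ?_⟩, ?_⟩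
  · positivity
  · positivity
  · apply le_of_eq; simp only; ring
  · have hD : 0 ≤ a * d - x ^ 2 := by have := hG.2.2; simp only at this; linarith
    have : ((a, x, d) : ℝ × ℝ × ℝ) - (N⁻¹ * w1 ^ 2, N⁻¹ * (w1 * w2), N⁻¹ * w2 ^ 2)
        = ((a * d - x ^ 2) * N⁻¹) • ((y2 ^ 2, - (y1 * y2), y1 ^ 2) : ℝ × ℝ × ℝ) := by
      simp only [Prod.mk_sub_mk, Prod.smul_mk, smul_eq_mul, Prod.mk.injEq]
      simp only [bil] at hN
      refine ⟨?_, ?_, ?_⟩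
      · field_simp; rw [hN, hw1]; ring
      · field_simp; rw [hN, hw1, hw2]; ring
      · field_simp; rw [hN, hw2]; ring
    rw [this]
    refine cone_smul (by positivity) ⟨by positivity, by positivity, ?_⟩
    apply le_of_eq; simp only; ring
  · have : bil p1 p2 q1 q2 (N⁻¹ * w1 ^ 2, N⁻¹ * (w1 * w2), N⁻¹ * w2 ^ 2)
        = N⁻¹ * (bil p1 p2 y1 y2 (a, x, d) * bil q1 q2 y1 y2 (a, x, d)) := by
      simp only [bil, hw1, hw2]; ring
    rw [this, e1, e2, hNe]
    have h0 : P * Q + B ≠ 0 := by linarith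
    apply le_of_eq
    field_simp

lemma factor (α β γ : ℝ) (h : α * γ < β ^ 2) : ∃ p1 p2 q1 q2 : ℝ,
    p1 * q1 = α ∧ p1 * q2 + p2 * q1 = 2 * β ∧ p2 * q2 = γ ∧
    0 < p1 ^ 2 + p2 ^ 2 ∧ 0 < q1 ^ 2 + q2 ^ 2 := by
  by_cases ha : α = 0
  · subst ha
    have : β ≠ 0 := by rintro rfl; simp at h
    exact ⟨0, 1, 2 * β, γ, by ring, by ring, by ring, by norm_num, by positivity⟩
  · have hs := Real.sq_sqrt (sub_nonneg.2 h.le)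
    refine ⟨α, β + √(β ^ 2 - α * γ), 1, (β - √(β ^ 2 - α * γ)) / α, by ring, ?_, ?_,
      by positivity, by positivity⟩
    · field_simp; ring
    · field_simp; nlinarith

lemma sqrt_conc {a s δ : ℝ} (ha : 0 ≤ a) (ha1 : a ≤ 1) (hs : 0 ≤ s) (hδ : 0 ≤ δ) :
    √δ + a * (√(s + δ) - √δ) ≤ √(s * a + δ) := by
  apply Real.le_sqrt_of_sq_le
  have h1 := Real.sq_sqrt hδ
  have h2 := Real.sq_sqrt (add_nonneg hs hδ)
  set S := √(s + δ)
  set D := √δ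
  have : s * a + δ - (D + a * (S - D)) ^ 2 = a * (1 - a) * (S - D) ^ 2 := by
    have : s = S ^ 2 - D ^ 2 := by linarith
    rw [this, ← h1]; ring
  have : 0 ≤ a * (1 - a) * (S - D) ^ 2 :=
    mul_nonneg (mul_nonneg ha (by linarith)) (sq_nonneg _)
  linarith

lemma fid {n : ℕ} (a b : Fin n → ℝ) (ha : ∀ i, 0 ≤ a i) (hb : ∀ i, 0 ≤ b i)
    (sa : ∑ i, a i = 1) (sb : ∑ i, b i = 1) {s δ : ℝ} (hs : 0 ≤ s) (hδ : 0 ≤ δ) :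
    ((n : ℝ) - 2) * δ + 2 * (√(s + δ) * √δ) ≤ ∑ i, √(s * a i + δ) * √(s * b i + δ) := by
  have ha1 : ∀ i, a i ≤ 1 := fun i => by
    rw [← sa]; exact Finset.single_le_sum (fun j _ => ha j) (Finset.mem_univ i)
  have hb1 : ∀ i, b i ≤ 1 := fun i => by
    rw [← sb]; exact Finset.single_le_sum (fun j _ => hb j) (Finset.mem_univ i)
  have hSD : √δ ≤ √(s + δ) := Real.sqrt_le_sqrt (by linarith)
  have hD := Real.sqrt_nonneg δ
  have hD2 := Real.sq_sqrt hδ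
  set S := √(s + δ)
  set D := √δ
  have h1 : ∑ i, (D ^ 2 + D * (S - D) * a i + D * (S - D) * b i) ≤
      ∑ i, √(s * a i + δ) * √(s * b i + δ) := by
    refine Finset.sum_le_sum fun i _ => ?_
    have h2 := mul_le_mul (sqrt_conc (ha i) (ha1 i) hs hδ) (sqrt_conc (hb i) (hb1 i) hs hδ)
      (add_nonneg hD (mul_nonneg (hb i) (sub_nonneg.2 hSD))) (Real.sqrt_nonneg _)
    refine le_trans ?_ h2
    have : 0 ≤ (a i * b i) * (S - D) ^ 2 := mul_nonneg (mul_nonneg (ha i) (hb i)) (sq_nonneg _)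
    change _ ≤ (D + a i * (S - D)) * (D + b i * (S - D))
    nlinarith
  refine le_trans (le_of_eq ?_) h1
  rw [Finset.sum_add_distrib, Finset.sum_add_distrib, ← Finset.mul_sum, ← Finset.mul_sum, sa, sb]
  simp
  rw [← hD2]; ring

/-- The identity. -/
def one3 : ℝ × ℝ × ℝ := (1, 0, 1)

lemma bil_add (p1 p2 q1 q2 : ℝ) (G H : ℝ × ℝ × ℝ) :
    bil p1 p2 q1 q2 (G + H) = bil p1 p2 q1 q2 G + bil p1 p2 q1 q2 H := by
  simp [bil]; ring

lemma bil_smul (p1 p2 q1 q2 c : ℝ) (G : ℝ × ℝ × ℝ) :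
    bil p1 p2 q1 q2 (c • G) = c * bil p1 p2 q1 q2 G := by
  simp [bil]; ring

lemma bil_sum {n : ℕ} (p1 p2 q1 q2 : ℝ) (G : Fin n → ℝ × ℝ × ℝ) :
    bil p1 p2 q1 q2 (∑ i, G i) = ∑ i, bil p1 p2 q1 q2 (G i) := by
  simp [bil, Prod.fst_sum, Prod.snd_sum, Finset.mul_sum, Finset.sum_add_distrib]

lemma bil_one (p1 p2 : ℝ) : bil p1 p2 p1 p2 one3 = p1 ^ 2 + p2 ^ 2 := by
  simp [bil, one3]; ring

lemma E_bound (p1 p2 q1 q2 : ℝ) {e : ℝ × ℝ × ℝ} (he : e ∈ intv one3) :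
    2 * bil p1 p2 q1 q2 e - bil p1 p2 q1 q2 one3 ≤
      √(p1 ^ 2 + p2 ^ 2) * √(q1 ^ 2 + q2 ^ 2) := by
  have h1 := le_of_abs_le (bil_cs p1 p2 q1 q2 he.1)
  have h2 := (abs_le.1 (bil_cs p1 p2 q1 q2 he.2)).1
  have s1 : ∀ p1 p2 q1 q2, bil p1 p2 q1 q2 (one3 - e) =
      bil p1 p2 q1 q2 one3 - bil p1 p2 q1 q2 e := by
    intros; simp [bil]; ring
  have a1 := bil_nonneg p1 p2 he.1
  have a2 := bil_nonneg p1 p2 he.2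
  have b1 := bil_nonneg q1 q2 he.1
  have b2 := bil_nonneg q1 q2 he.2
  have hp : bil p1 p2 p1 p2 e + bil p1 p2 p1 p2 (one3 - e) = p1 ^ 2 + p2 ^ 2 := by
    rw [s1, bil_one]; ring
  have hq : bil q1 q2 q1 q2 e + bil q1 q2 q1 q2 (one3 - e) = q1 ^ 2 + q2 ^ 2 := by
    rw [s1, bil_one]; ring
  have key : √(bil p1 p2 p1 p2 e) * √(bil q1 q2 q1 q2 e) +
      √(bil p1 p2 p1 p2 (one3 - e)) * √(bil q1 q2 q1 q2 (one3 - e)) ≤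
      √(p1 ^ 2 + p2 ^ 2) * √(q1 ^ 2 + q2 ^ 2) := by
    rw [← hp, ← hq, ← Real.sqrt_mul (add_nonneg a1 a2)]
    apply Real.le_sqrt_of_sq_le
    have t1 := Real.sq_sqrt a1
    have t2 := Real.sq_sqrt a2
    have t3 := Real.sq_sqrt b1
    have t4 := Real.sq_sqrt b2
    generalize √(bil p1 p2 p1 p2 e) = x at *
    generalize √(bil q1 q2 q1 q2 e) = y at *
    generalize √(bil p1 p2 p1 p2 (one3 - e)) = z at *
    generalize √(bil q1 q2 q1 q2 (one3 - e)) = w at *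
    rw [← t1, ← t2, ← t3, ← t4]
    nlinarith [sq_nonneg (x * w - y * z)]
  have := s1 p1 p2 q1 q2
  linarith

lemma main3 {n : ℕ} (_hn : 0 < n) (F : Fin n → ℝ × ℝ × ℝ) (hF : ∀ i, F i ∈ cone) (sF : ∑ i, F i = one3)
    (e : ℝ × ℝ × ℝ) (he : e ∈ intv one3) {s δ : ℝ} (hs : 0 ≤ s) (hs1 : s ≤ 1) (hδ : 0 < δ)
    (hsum : s + n * δ = 1)
    (hopt : s ≤ ((n : ℝ) - 2) * δ + 2 * (√(s + δ) * √δ)) :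
    ∃ J : Fin n → ℝ × ℝ × ℝ, (∀ i, J i ∈ intv (s • F i + δ • one3)) ∧
      ∑ i, J i = s • e + ((1 - s) / 2) • one3 := by
  classical
  by_contra hcon
  set G : Fin n → ℝ × ℝ × ℝ := fun i => s • F i + δ • one3 with hG
  have hone : one3 ∈ cone := by simp [cone, one3]
  have hGc : ∀ i, G i ∈ cone := fun i => cone_add (cone_smul hs (hF i)) (cone_smul hδ.le hone)
  have sG : ∑ i, G i = one3 := by
    simp only [hG]
    rw [Finset.sum_add_distrib, ← Finset.smul_sum, sF, Finset.sum_const, Finset.card_univ,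
      Fintype.card_fin, ← Nat.cast_smul_eq_nsmul ℝ, smul_smul, ← add_smul, hsum, one_smul]
  let L : (Fin n → ℝ × ℝ × ℝ) →ₗ[ℝ] ℝ × ℝ × ℝ := ∑ i, LinearMap.proj i
  have hL : ∀ J, L J = ∑ i, J i := fun J => by simp [L]
  set K := L '' (Set.pi Set.univ fun i => intv (G i)) with hK
  have hKc : Convex ℝ K := (convex_pi fun i _ => intv_convex (G i)).linear_image L
  have hKcomp : IsCompact K :=
    (isCompact_univ_pi fun i => intv_compact (G i)).image L.continuous_of_finiteDimensional
  set T := s • e + ((1 - s) / 2) • one3 with hT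
  have hTK : T ∉ K := by
    rintro ⟨J, hJ, hJT⟩
    exact hcon ⟨J, fun i => hJ i (Set.mem_univ i), by rw [← hL, hJT]⟩
  obtain ⟨f, u, hfu, huT⟩ := geometric_hahn_banach_closed_point hKc hKcomp.isClosed hTK
  have hmax : ∀ J : Fin n → ℝ × ℝ × ℝ, (∀ i, J i ∈ intv (G i)) → f (∑ i, J i) < f T := by
    intro J hJ
    refine lt_trans (hfu _ ⟨J, fun i _ => hJ i, hL J⟩) huT
  obtain ⟨α, β, γ, hf⟩ : ∃ α β γ : ℝ, ∀ v : ℝ × ℝ × ℝ, f v = α * v.1 + 2 * β * v.2.1 + γ * v.2.2 := by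
    refine ⟨f (1, 0, 0), f (0, 1, 0) / 2, f (0, 0, 1), fun v => ?_⟩
    have : v = v.1 • ((1, 0, 0) : ℝ × ℝ × ℝ) + v.2.1 • ((0, 1, 0) : ℝ × ℝ × ℝ)
        + v.2.2 • ((0, 0, 1) : ℝ × ℝ × ℝ) := by
      ext <;> simp
    conv_lhs => rw [this]
    simp only [map_add, map_smul, smul_eq_mul]; ring
  have hTc : T ∈ intv one3 := by
    refine ⟨cone_add (cone_smul hs he.1) (cone_smul (by linarith) hone), ?_⟩
    have : one3 - T = s • (one3 - e) + ((1 - s) / 2) • one3 := by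
      rw [hT]; ext <;> simp <;> ring
    rw [this]
    exact cone_add (cone_smul hs he.2) (cone_smul (by linarith) hone)
  rcases lt_or_ge (α * γ) (β ^ 2) with hd | hd
  · obtain ⟨p1, p2, q1, q2, h1, h2, h3, hp, hq⟩ := factor α β γ hd
    have hfb : ∀ v, f v = bil p1 p2 q1 q2 v := fun v => by
      rw [hf, bil, h1, h2, h3]
    have hGb : ∀ (y1 y2 : ℝ) i, bil y1 y2 y1 y2 (G i) =
        s * bil y1 y2 y1 y2 (F i) + δ * (y1 ^ 2 + y2 ^ 2) := fun y1 y2 i => by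
      rw [hG]; simp only; rw [bil_add, bil_smul, bil_smul, bil_one]
    have hpos : ∀ (y1 y2 : ℝ) i, 0 < y1 ^ 2 + y2 ^ 2 → 0 < bil y1 y2 y1 y2 (G i) := by
      intro y1 y2 i hy
      rw [hGb]
      have := mul_nonneg hs (bil_nonneg y1 y2 (hF i))
      positivity
    choose J hJ hJv using fun i => exists_opt p1 p2 q1 q2 (hGc i) (hpos p1 p2 i hp) (hpos q1 q2 i hq)
    have hlt := hmax J hJ
    rw [hfb, hfb, bil_sum] at hlt
    have hge := Finset.sum_le_sum fun i (_ : i ∈ Finset.univ) => hJv i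
    rw [← Finset.sum_div, Finset.sum_add_distrib, ← bil_sum, sG] at hge
    have hTv : bil p1 p2 q1 q2 T = s * bil p1 p2 q1 q2 e + (1 - s) / 2 * bil p1 p2 q1 q2 one3 := by
      rw [hT, bil_add, bil_smul, bil_smul]
    have hE := mul_le_mul_of_nonneg_left (E_bound p1 p2 q1 q2 he) hs
    have hfid := fid (fun i => bil p1 p2 p1 p2 (F i) / (p1 ^ 2 + p2 ^ 2))
      (fun i => bil q1 q2 q1 q2 (F i) / (q1 ^ 2 + q2 ^ 2))
      (fun i => div_nonneg (bil_nonneg _ _ (hF i)) hp.le)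
      (fun i => div_nonneg (bil_nonneg _ _ (hF i)) hq.le)
      (by rw [← Finset.sum_div, ← bil_sum, sF, bil_one, div_self hp.ne'])
      (by rw [← Finset.sum_div, ← bil_sum, sF, bil_one, div_self hq.ne']) hs hδ.le
    have hsc : ∀ (y1 y2 : ℝ) i, 0 < y1 ^ 2 + y2 ^ 2 → √(bil y1 y2 y1 y2 (G i)) =
        √(y1 ^ 2 + y2 ^ 2) * √(s * (bil y1 y2 y1 y2 (F i) / (y1 ^ 2 + y2 ^ 2)) + δ) := by
      intro y1 y2 i hy
      rw [← Real.sqrt_mul hy.le, hGb]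
      congr 1; field_simp
    have heq : ∑ i, √(bil p1 p2 p1 p2 (G i)) * √(bil q1 q2 q1 q2 (G i)) =
        √(p1 ^ 2 + p2 ^ 2) * √(q1 ^ 2 + q2 ^ 2) *
        ∑ i, √(s * (bil p1 p2 p1 p2 (F i) / (p1 ^ 2 + p2 ^ 2)) + δ) *
          √(s * (bil q1 q2 q1 q2 (F i) / (q1 ^ 2 + q2 ^ 2)) + δ) := by
      rw [Finset.mul_sum]
      refine Finset.sum_congr rfl fun i _ => ?_
      rw [hsc p1 p2 i hp, hsc q1 q2 i hq]; ring
    have hfin := mul_le_mul_of_nonneg_left (hopt.trans hfid)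
      (by positivity : 0 ≤ √(p1 ^ 2 + p2 ^ 2) * √(q1 ^ 2 + q2 ^ 2))
    rw [← heq] at hfin
    linarith
  · -- definite case
    have hdef : ∀ v ∈ cone, 0 ≤ α → 0 ≤ γ → 0 ≤ α * v.1 + 2 * β * v.2.1 + γ * v.2.2 := by
      rintro ⟨a, x, d⟩ ⟨h1, h2, h3⟩ hα hγ
      simp only at *
      have : |2 * β * x| ≤ α * a + γ * d := by
        refine abs_le_of_sq_le_sq ?_ (by positivity)
        have := mul_le_mul hd h3 (by positivity) (by positivity)
        nlinarith [sq_nonneg (α * a - γ * d)]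
      linarith [(abs_le.1 this).1]
    have hdef' : ∀ v ∈ cone, α ≤ 0 → γ ≤ 0 → α * v.1 + 2 * β * v.2.1 + γ * v.2.2 ≤ 0 := by
      rintro ⟨a, x, d⟩ ⟨h1, h2, h3⟩ hα hγ
      simp only at *
      have : |2 * β * x| ≤ (-α) * a + (-γ) * d := by
        refine abs_le_of_sq_le_sq ?_ (add_nonneg (mul_nonneg (by linarith) h1)
          (mul_nonneg (by linarith) h2))
        have := mul_le_mul hd h3 (by positivity) (by nlinarith)
        nlinarith [sq_nonneg (α * a - γ * d)]
      linarith [(abs_le.1 this).2]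
    have hc : (0 ≤ α ∧ 0 ≤ γ) ∨ (α ≤ 0 ∧ γ ≤ 0) :=
      mul_nonneg_iff.1 (le_trans (sq_nonneg β) hd)
    rcases hc with ⟨ha, hg⟩ | ⟨ha, hg⟩
    · have h := hmax G fun i => ⟨hGc i, by simp [cone]⟩
      rw [sG] at h
      have h2 := hdef _ hTc.2 ha hg
      rw [← hf, map_sub] at h2
      linarith
    · have h := hmax (fun _ => 0) fun i => ⟨by simp [cone], by simpa using hGc i⟩
      simp only [Finset.sum_const_zero, map_zero] at h
      have h2 := hdef' _ hTc.1 ha hg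
      rw [← hf] at h2
      linarith

/-- coordinates to matrix -/
def toM (v : ℝ × ℝ × ℝ) : Matrix (Fin 2) (Fin 2) ℝ := !![v.1, v.2.1; v.2.1, v.2.2]
/-- matrix to coordinates -/
def ofM (M : Matrix (Fin 2) (Fin 2) ℝ) : ℝ × ℝ × ℝ := (M 0 0, M 0 1, M 1 1)

lemma toM_psd {v : ℝ × ℝ × ℝ} (hv : v ∈ cone) : (toM v).PosSemidef := by
  rw [psd_iff]
  obtain ⟨h1, h2, h3⟩ := hv
  simpa [toM] using ⟨h1, h2, h3⟩

lemma ofM_cone {M : Matrix (Fin 2) (Fin 2) ℝ} (h : M.PosSemidef) : ofM M ∈ cone := by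
  rw [psd_iff] at h
  exact ⟨h.2.1, h.2.2.1, h.2.2.2⟩

lemma toM_ofM {M : Matrix (Fin 2) (Fin 2) ℝ} (h : M.PosSemidef) : toM (ofM M) = M := by
  rw [psd_iff] at h
  ext i j
  fin_cases i <;> fin_cases j <;> simp [toM, ofM, h.1]

lemma toM_add (v w : ℝ × ℝ × ℝ) : toM (v + w) = toM v + toM w := by
  ext i j
  fin_cases i <;> fin_cases j <;> simp [toM]

lemma toM_smul (c : ℝ) (v : ℝ × ℝ × ℝ) : toM (c • v) = c • toM v := by
  ext i j
  fin_cases i <;> fin_cases j <;> simp [toM]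

lemma toM_one : toM one3 = 1 := by
  ext i j
  fin_cases i <;> fin_cases j <;> simp [toM, one3]

lemma toM_sum {n : ℕ} (v : Fin n → ℝ × ℝ × ℝ) : toM (∑ i, v i) = ∑ i, toM (v i) :=
  map_sum (⟨⟨toM, by ext i j; fin_cases i <;> fin_cases j <;> simp [toM]⟩, toM_add⟩ :
    (ℝ × ℝ × ℝ) →+ Matrix (Fin 2) (Fin 2) ℝ) v Finset.univ

lemma ofM_sum {n : ℕ} (M : Fin n → Matrix (Fin 2) (Fin 2) ℝ) :
    ofM (∑ i, M i) = ∑ i, ofM (M i) := by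
  simp [ofM, Prod.ext_iff, Prod.fst_sum, Prod.snd_sum, Matrix.sum_apply]

lemma compat_of {n : ℕ} (hn : 0 < n) {E : Fin 2 → Matrix (Fin 2) (Fin 2) ℝ}
    {F : Fin n → Matrix (Fin 2) (Fin 2) ℝ} (hE : IsPOVM E) (hF : IsPOVM F)
    {s : ℝ} (hs : 0 ≤ s) (hs1 : s < 1)
    (hopt : s ≤ ((n : ℝ) - 2) * ((1 - s) / n) + 2 * (√(s + (1 - s) / n) * √((1 - s) / n))) :
    Compatible (noisy s E) (noisy s F) := by
  have hn' : (0 : ℝ) < n := by exact_mod_cast hn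
  set δ := (1 - s) / n with hδd
  have hδ : 0 < δ := div_pos (by linarith) hn'
  have hone : ofM 1 = one3 := by simp [ofM, one3]
  have hE01 : E 0 + E 1 = 1 := by simpa using hE.2
  have hE1 : one3 - ofM (E 0) = ofM (E 1) := by
    rw [← hone, ← hE01]; simp [ofM]
  obtain ⟨J, hJ, hJs⟩ := main3 hn (fun i => ofM (F i)) (fun i => ofM_cone (hF.1 i))
    (by rw [← ofM_sum, hF.2, hone]) (ofM (E 0))
    ⟨ofM_cone (hE.1 0), by rw [hE1]; exact ofM_cone (hE.1 1)⟩ hs hs1.le hδ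
    (by rw [hδd]; field_simp; ring) hopt
  have hFn : ∀ i, toM (s • ofM (F i) + δ • one3) = noisy s F i := fun i => by
    rw [toM_add, toM_smul, toM_smul, toM_one, toM_ofM (hF.1 i), noisy]
  have hsplit : ∀ i, toM (J i) + toM ((s • ofM (F i) + δ • one3) - J i) = noisy s F i := fun i => by
    rw [← toM_add, add_sub_cancel, hFn]
  have hsF : ∑ i, noisy s F i = 1 := by
    simp only [noisy]
    rw [Finset.sum_add_distrib, ← Finset.smul_sum, hF.2, Finset.sum_const, Finset.card_univ,
      Fintype.card_fin, ← Nat.cast_smul_eq_nsmul ℝ, smul_smul, ← add_smul]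
    have : s + (n : ℝ) * ((1 - s) / n) = 1 := by field_simp; ring
    rw [this, one_smul]
  have hE0s : noisy s E 0 = ∑ i, toM (J i) := by
    rw [← toM_sum, hJs, toM_add, toM_smul, toM_smul, toM_one, toM_ofM (hE.1 0), noisy]
    norm_num
  have hEs : noisy s E 0 + noisy s E 1 = 1 := by
    have : noisy s E 0 + noisy s E 1 = s • (E 0 + E 1) + (1 - s) • (1 : Matrix (Fin 2) (Fin 2) ℝ) := by
      simp only [noisy]
      push_cast
      module
    rw [this, hE01, ← add_smul]; simp
  have hE1s : noisy s E 1 = ∑ i, toM ((s • ofM (F i) + δ • one3) - J i) := by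
    have h := hsF
    simp only [← hsplit] at h
    rw [Finset.sum_add_distrib, ← hE0s, ← hEs] at h
    exact (add_left_cancel h).symm
  refine ⟨fun ab => if ab.1 = 0 then toM (J ab.2)
    else toM ((s • ofM (F ab.2) + δ • one3) - J ab.2), ⟨?_, ?_⟩, ?_, ?_⟩
  · rintro ⟨a, b⟩
    simp only
    split_ifs
    · exact toM_psd (hJ b).1
    · exact toM_psd (hJ b).2
  · rw [Fintype.sum_prod_type]
    simp only [Fin.sum_univ_two, if_true, one_ne_zero, if_false]
    rw [← hE0s, ← hE1s, hEs]
  · intro a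
    fin_cases a
    · simpa using hE0s
    · simpa using hE1s
  · intro b
    simp only [Fin.sum_univ_two, if_true, one_ne_zero, if_false]
    exact (hsplit b).symm

lemma upper {n : ℕ} {s r : ℝ} (hr : 1 < r) (hr2 : r ^ 2 = (n : ℝ) + 2)
    (hc : Compatible (noisy s Eopt) (noisy s (Fopt (n + 1)))) :
    s ≤ (r + 2) / (2 * (r + 1)) := by
  obtain ⟨J, ⟨hJ, -⟩, hE, hF⟩ := hc
  set δ := (1 - s) / ((n + 1 + 1 : ℕ) : ℝ) with hδ
  have hJ' := fun ab => (psd_iff _).1 (hJ ab)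
  have bound : ∀ b (t : ℝ), 0 < t → J (0, b) 0 1 - J (1, b) 0 1 ≤
      (t * noisy s (Fopt (n + 1)) b 0 0 + noisy s (Fopt (n + 1)) b 1 1 / t) / 2 := by
    intro b t ht
    have h0 := hJ' (0, b)
    have h1 := hJ' (1, b)
    have k0 := le_of_abs_le (abs_le_of_cone h0.2.1 h0.2.2.1 h0.2.2.2 ht)
    have k1 := (abs_le.1 (abs_le_of_cone h1.2.1 h1.2.2.1 h1.2.2.2 ht)).1
    rw [hF b]
    simp only [Fin.sum_univ_two, Matrix.add_apply, mul_add, add_div]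
    simp only [add_div] at k0 k1
    linarith
  have e0 : s * (1 / 2) = ∑ b, J (0, b) 0 1 := by
    have := congrFun (congrFun (hE 0) 0) 1
    rw [Matrix.sum_apply] at this
    rw [← this]; simp [noisy, Eopt]
  have e1 : s * (-1 / 2) = ∑ b, J (1, b) 0 1 := by
    have := congrFun (congrFun (hE 1) 0) 1
    rw [Matrix.sum_apply] at this
    rw [← this]; simp [noisy, Eopt]; ring
  have e : s = ∑ b, (J (0, b) 0 1 - J (1, b) 0 1) := by
    rw [Finset.sum_sub_distrib, ← e0, ← e1]; ring
  have b0 := bound 0 (r + 1) (by linarith)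
  have b1 := bound 1 (1 / (r + 1)) (by positivity)
  have b2 : ∀ b : Fin n, J (0, b.succ.succ) 0 1 - J (1, b.succ.succ) 0 1 ≤ δ := by
    intro b
    have := bound b.succ.succ 1 one_pos
    simp [noisy, Fopt] at this
    rw [hδ]; push_cast; linarith
  rw [Fin.sum_univ_succ, Fin.sum_univ_succ] at e
  have b3 := Finset.sum_le_sum fun b (_ : b ∈ Finset.univ) => b2 b
  simp only [Finset.sum_const, Finset.card_univ, Fintype.card_fin, nsmul_eq_mul] at b3
  have f0 : noisy s (Fopt (n + 1)) 0 0 0 = δ ∧ noisy s (Fopt (n + 1)) 0 1 1 = s + δ := by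
    simp [noisy, Fopt, hδ]
  have f1 : noisy s (Fopt (n + 1)) 1 0 0 = s + δ ∧ noisy s (Fopt (n + 1)) 1 1 1 = δ := by
    simp [noisy, Fopt, hδ]
  rw [f0.1, f0.2] at b0
  rw [f1.1, f1.2] at b1
  have hδ2 : δ * r ^ 2 = 1 - s := by
    rw [hδ, hr2]; push_cast
    have : (n : ℝ) + 2 ≠ 0 := by positivity
    field_simp; ring
  have hn : (n : ℝ) = r ^ 2 - 2 := by linarith
  have e' : s ≤ ((r + 1) * δ + (s + δ) / (r + 1)) + (r ^ 2 - 2) * δ := by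
    rw [hn] at b3
    have q : (1 / (r + 1) * (s + δ) + δ / (1 / (r + 1))) = ((r + 1) * δ + (s + δ) / (r + 1)) := by
      field_simp; ring
    rw [q] at b1
    simp only [Fin.succ_zero_eq_one] at e
    linarith
  have hr1 : 0 < r + 1 := by linarith
  have e'' : s * (r + 1) ≤ (r + 1) * ((r + 1) * δ + (r ^ 2 - 2) * δ) + (s + δ) := by
    have := mul_le_mul_of_nonneg_right e' hr1.le
    have q : (s + δ) / (r + 1) * (r + 1) = s + δ := by field_simp
    nlinarith
  rw [le_div_iff₀ (by positivity)]
  have e3 : s * r ≤ δ * r ^ 2 * (r + 2) := by nlinarith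
  rw [hδ2] at e3
  nlinarith

lemma Eopt_povm : IsPOVM Eopt := by
  refine ⟨fun i => ?_, ?_⟩
  · rw [psd_iff]
    fin_cases i <;> simp [Eopt] <;> norm_num
  · ext i j
    fin_cases i <;> fin_cases j <;> simp [Eopt] <;> norm_num

lemma Fopt_povm (n : ℕ) : IsPOVM (Fopt (n + 1)) := by
  refine ⟨fun i => ?_, ?_⟩
  · rw [psd_iff]
    unfold Fopt
    split_ifs <;> simp
  · rw [Fin.sum_univ_succ, Fin.sum_univ_succ]
    ext i j
    fin_cases i <;> fin_cases j <;> simp [Fopt]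

end QAux

open QAux in
/-- The minimum real compatibility degree `s_ℝ(2,2,(2,k+1))` equals
`(k−1+√(k+1))/(2k)`, and it is attained by the pair `(Eopt, Fopt k)`. -/
theorem stmt_6 (k : ℕ) (hk : 1 ≤ k) :
    sInf {t : ℝ | ∃ (E : Fin 2 → Matrix (Fin 2) (Fin 2) ℝ)
        (F : Fin (k + 1) → Matrix (Fin 2) (Fin 2) ℝ),
        IsPOVM E ∧ IsPOVM F ∧ t = compatDeg E F}
      = ((k : ℝ) - 1 + Real.sqrt ((k : ℝ) + 1)) / (2 * (k : ℝ)) ∧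
    IsPOVM Eopt ∧ IsPOVM (Fopt k) ∧
    compatDeg Eopt (Fopt k) = ((k : ℝ) - 1 + Real.sqrt ((k : ℝ) + 1)) / (2 * (k : ℝ)) := by
  obtain ⟨n, rfl⟩ : ∃ n, k = n + 1 := ⟨k - 1, by omega⟩
  set r := Real.sqrt (((n + 1 : ℕ) : ℝ) + 1) with hr
  have hr2 : r ^ 2 = (n : ℝ) + 2 := by
    rw [hr, Real.sq_sqrt (by positivity)]; push_cast; ring
  have hr1 : 1 < r := by
    rw [hr]; apply Real.lt_sqrt_of_sq_lt; push_cast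
    have : (0 : ℝ) ≤ n := by positivity
    linarith
  have hval : (((n + 1 : ℕ) : ℝ) - 1 + r) / (2 * ((n + 1 : ℕ) : ℝ)) = (r + 2) / (2 * (r + 1)) := by
    have hn : ((n + 1 : ℕ) : ℝ) = (r - 1) * (r + 1) := by push_cast; linarith
    rw [hn]
    have h1 : r - 1 ≠ 0 := by linarith
    have h2 : r + 1 ≠ 0 := by linarith
    rw [div_eq_div_iff (by positivity) (by positivity)]
    ring
  rw [hval]
  set S := (r + 2) / (2 * (r + 1)) with hS
  have hS0 : 0 ≤ S := by positivity
  have hS1 : S < 1 := by rw [hS, div_lt_one (by positivity)]; linarith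
  have hδ : (1 - S) / ((n + 1 + 1 : ℕ) : ℝ) = 1 / (2 * r * (r + 1)) := by
    have hn : ((n + 1 + 1 : ℕ) : ℝ) = r ^ 2 := by push_cast; linarith
    rw [hn, hS]; field_simp; ring
  have hopt : S ≤ (((n + 1 + 1 : ℕ) : ℝ) - 2) * ((1 - S) / ((n + 1 + 1 : ℕ) : ℝ)) +
      2 * (√(S + (1 - S) / ((n + 1 + 1 : ℕ) : ℝ)) * √((1 - S) / ((n + 1 + 1 : ℕ) : ℝ))) := by
    rw [hδ, ← Real.sqrt_mul (by positivity)]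
    have : (S + 1 / (2 * r * (r + 1))) * (1 / (2 * r * (r + 1))) = (1 / (2 * r)) ^ 2 := by
      rw [hS]; field_simp; ring
    rw [this, Real.sqrt_sq (by positivity)]
    have hn : ((n + 1 + 1 : ℕ) : ℝ) = r ^ 2 := by push_cast; linarith
    rw [hn, hS]
    apply le_of_eq; field_simp; ring
  have lower : ∀ (E : Fin 2 → Matrix (Fin 2) (Fin 2) ℝ)
      (F : Fin (n + 1 + 1) → Matrix (Fin 2) (Fin 2) ℝ), IsPOVM E → IsPOVM F →
      S ≤ compatDeg E F := fun E F hE hF =>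
    le_csSup ⟨1, fun x hx => hx.1.2⟩ ⟨⟨hS0, hS1.le⟩, compat_of (by omega) hE hF hS0 hS1 hopt⟩
  have hdeg : compatDeg Eopt (Fopt (n + 1)) = S := by
    refine le_antisymm ?_ (lower _ _ Eopt_povm (Fopt_povm n))
    refine csSup_le ⟨S, ⟨hS0, hS1.le⟩,
      compat_of (by omega) Eopt_povm (Fopt_povm n) hS0 hS1 hopt⟩ ?_
    rintro s ⟨-, hc⟩
    exact upper hr1 hr2 hc
  refine ⟨?_, Eopt_povm, Fopt_povm n, hdeg⟩
  refine le_antisymm ?_ ?_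
  · refine csInf_le ⟨S, ?_⟩ ⟨_, _, Eopt_povm, Fopt_povm n, hdeg.symm⟩
    rintro t ⟨E, F, hE, hF, rfl⟩
    exact lower E F hE hF
  · refine le_csInf ⟨_, _, _, Eopt_povm, Fopt_povm n, hdeg.symm⟩ ?_
    rintro t ⟨E, F, hE, hF, rfl⟩
    exact lower E F hE hF
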